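/- arXiv:1304.3154 — 8 statements merged into one kernel-verified Lean document; each statement's English description precedes it below -/
import Mathlib

section
/- Gallai's Theorem on ℤⁿ: Let n be a positive integer and let S be a finite subset of ℤⁿ. Then for every coloring of ℤⁿ with finitely many colors (i.e., every map χ : ℤⁿ → Fin c for some positive integer c), there exist a ∈ ℤⁿ and a positive integer b such that the set a + bS = {a + b•s : s ∈ S} is monochromatic under χ (all its points receive the same color). -/
/-- Gallai's Theorem on ℤⁿ: for any finite subset `S` of `ℤⁿ` and any finite coloring
`χ : ℤⁿ → Fin c`, there is a homothetic copy `a + b • S` (with `b` a positive integer)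
that is monochromatic. -/
theorem gallai_int (n : ℕ) (hn : 0 < n) (S : Finset (Fin n → ℤ))
    (c : ℕ) (hc : 0 < c) (χ : (Fin n → ℤ) → Fin c) :
    ∃ (a : Fin n → ℤ) (b : ℤ), 0 < b ∧
      ∃ i : Fin c, ∀ s ∈ S, χ (a + b • s) = i := by
  -- In Mathlib's form of the theorem the dilation factor is a positive natural number.
  obtain ⟨b, hb, a, i, h⟩ := Combinatorics.exists_mono_homothetic_copy S χ
  refine ⟨a, b, by exact_mod_cast hb, i, fun s hs => ?_⟩
  rw [natCast_zsmul, add_comm]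
  exact h s hs
end

section
/- Gallai's Theorem on Euclidean space: Let n be a positive integer and let S be a finite subset of ℝⁿ. Then for every coloring of ℝⁿ with finitely many colors (i.e., every map χ : ℝⁿ → Fin c for some positive integer c), there exist a ∈ ℝⁿ and a positive real number b such that the set a + bS = {a + b•s : s ∈ S} is monochromatic under χ. -/
/-- Gallai's Theorem on Euclidean space: for any finite subset `S` of `ℝⁿ` and any finite
coloring `χ : ℝⁿ → Fin c`, there is a homothetic copy `a + b • S` (with `b` a positive real)
that is monochromatic. -/
theorem gallai_real (n : ℕ) (hn : 0 < n) (S : Finset (Fin n → ℝ))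
    (c : ℕ) (hc : 0 < c) (χ : (Fin n → ℝ) → Fin c) :
    ∃ (a : Fin n → ℝ) (b : ℝ), 0 < b ∧
      ∃ i : Fin c, ∀ s ∈ S, χ (a + b • s) = i := by
  -- Mathlib's van der Waerden theorem for commutative monoids (a corollary of Hales-Jewett)
  -- already gives a dilation factor that is a positive natural number.
  obtain ⟨k, hk, a, i, h⟩ := Combinatorics.exists_mono_homothetic_copy S χ
  refine ⟨a, k, Nat.cast_pos.mpr hk, i, fun s hs => ?_⟩
  rw [add_comm, Nat.cast_smul_eq_nsmul]
  exact h s hs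
end

section
/- For every 2-coloring of the plane ℝ² (i.e., every map χ : ℝ² → Fin 2), the set of positive real numbers r such that there exists a monochromatic equilateral triangle of side length r (i.e., three points in ℝ² that are pairwise at distance r and all receive the same color) is uncountable. -/
/-!
Call a length *good* if it is the side of a monochromatic equilateral triangle.  If `u`, `v` and
`u + v` are all not good, then no three points at positions `x`, `x + u`, `x + u + v` of a line
have the same colour (`no_mono_collinear`): five further points
complete these to a set with six equilateral triangles of sides `u`, `v`, `u + v`, not all of
which can avoid being monochromatic.

If there were only countably many good lengths, some `s > 0` would have no multiple `k * s`,
`k ≥ 1`, among them.  Of the five points `0, s, 2s, 3s, 4s` of a line, three have the same colour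
by the pigeonhole principle, and their mutual distances are multiples of `s`, contradicting
`no_mono_collinear`.
-/

/-- The point with coordinates `(a, b)` in the basis of the triangular lattice, i.e. `a + b ω`
with `ω = exp (i π / 3)`. -/
noncomputable def triPt (a b : ℝ) : EuclideanSpace ℝ (Fin 2) :=
  !₂[a + b / 2, √3 / 2 * b]

/-- The norm form of the triangular lattice computes distances. -/
lemma dist_triPt {a b c d r : ℝ} (hr : 0 ≤ r)
    (h : (a - c) ^ 2 + (a - c) * (b - d) + (b - d) ^ 2 = r ^ 2) :
    dist (triPt a b) (triPt c d) = r := by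
  rw [EuclideanSpace.dist_eq, Real.sqrt_eq_iff_eq_sq (by positivity) hr]
  have h3 : √3 ^ 2 = 3 := Real.sq_sqrt (by norm_num)
  simp only [triPt, Fin.sum_univ_two, Real.dist_eq, sq_abs]
  simp only [Matrix.cons_val_zero, Matrix.cons_val_one]
  linear_combination h + (b - d) ^ 2 / 4 * h3

/-- If `u`, `v`, `u + v` are not sides of monochromatic equilateral triangles, then no degenerate
triangle with sides `u`, `v`, `u + v` on the first axis is monochromatic. -/
lemma no_mono_collinear (χ : EuclideanSpace ℝ (Fin 2) → Fin 2) {u v : ℝ} (hu : 0 < u) (hv : 0 < v)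
    (H : ∀ r, r = u ∨ r = v ∨ r = u + v → ∀ x y z : EuclideanSpace ℝ (Fin 2),
      dist x y = r → dist y z = r → dist x z = r → ¬ (χ x = χ y ∧ χ y = χ z))
    (x : ℝ) (hAB : χ (triPt x 0) = χ (triPt (x + u) 0))
    (hBC : χ (triPt (x + u) 0) = χ (triPt (x + u + v) 0)) : False := by
  have T : ∀ r, r = u ∨ r = v ∨ r = u + v → ∀ a b c d e f : ℝ,
      (a - c) ^ 2 + (a - c) * (b - d) + (b - d) ^ 2 = r ^ 2 →
      (c - e) ^ 2 + (c - e) * (d - f) + (d - f) ^ 2 = r ^ 2 →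
      (a - e) ^ 2 + (a - e) * (b - f) + (b - f) ^ 2 = r ^ 2 →
      ¬ (χ (triPt a b) = χ (triPt c d) ∧ χ (triPt c d) = χ (triPt e f)) := by
    intro r hr a b c d e f h1 h2 h3
    have h0 : 0 ≤ r := by rcases hr with h | h | h <;> linarith
    exact H r hr _ _ _ (dist_triPt h0 h1) (dist_triPt h0 h2) (dist_triPt h0 h3)
  -- Erect an equilateral triangle on each side of the monochromatic triple; the three apexes
  -- have the other colour.
  have t1 := T u (by simp) x 0 (x + u) 0 x u (by ring) (by ring) (by ring)
  have t2 := T v (by simp) (x + u) 0 (x + u + v) 0 (x + u + v) (-v) (by ring) (by ring) (by ring)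
  have t3 := T (u + v) (by simp) x 0 (x + u + v) 0 (x + u + v) (-(u + v))
    (by ring) (by ring) (by ring)
  -- The last three triangles use the two further points `(x + v, -v)` and `(x, -v)`.
  have t4 := T u (by simp) (x + u + v) (-v) (x + u + v) (-(u + v)) (x + v) (-v)
    (by ring) (by ring) (by ring)
  have t5 := T v (by simp) x 0 (x + v) (-v) x (-v) (by ring) (by ring) (by ring)
  have t6 := T (u + v) (by simp) x u x (-v) (x + u + v) (-v) (by ring) (by ring) (by ring)
  generalize χ (triPt x 0) = A at *
  generalize χ (triPt (x + u) 0) = B at *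
  generalize χ (triPt (x + u + v) 0) = C at *
  generalize χ (triPt x u) = D at *
  generalize χ (triPt (x + u + v) (-v)) = E at *
  generalize χ (triPt (x + u + v) (-(u + v))) = F at *
  generalize χ (triPt (x + v) (-v)) = G at *
  generalize χ (triPt x (-v)) = K at *
  clear T H
  omega

/-- For every 2-coloring of the plane, the set of positive reals `r` for which there is a
monochromatic equilateral triangle of side length `r` is uncountable. -/
theorem uncountable_mono_equilateral_side_lengths
    (χ : EuclideanSpace ℝ (Fin 2) → Fin 2) :
    ¬ Set.Countable {r : ℝ | 0 < r ∧ ∃ x y z : EuclideanSpace ℝ (Fin 2),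
      dist x y = r ∧ dist y z = r ∧ dist x z = r ∧
      χ x = χ y ∧ χ y = χ z} := by
  intro hS
  set S := {r : ℝ | 0 < r ∧ ∃ x y z : EuclideanSpace ℝ (Fin 2),
      dist x y = r ∧ dist y z = r ∧ dist x z = r ∧ χ x = χ y ∧ χ y = χ z} with hSdef
  have hT : (⋃ k : ℕ, (fun r : ℝ => r / k) '' S).Countable :=
    Set.countable_iUnion fun k => hS.image _
  obtain ⟨s, hs, hs0⟩ := (hT.dense_compl ℝ).exists_mem_open isOpen_Ioi
    (⟨1, by simp⟩ : (Set.Ioi (0 : ℝ)).Nonempty)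
  have hs0 : 0 < s := hs0
  have hmul : ∀ k : ℕ, 0 < k → (k : ℝ) * s ∉ S := by
    intro k hk hmem
    refine hs (Set.mem_iUnion.2 ⟨k, _, hmem, ?_⟩)
    have : (k : ℝ) ≠ 0 := by positivity
    field_simp
  have pigeon : ∀ f : Fin 5 → Fin 2, ∃ i j k, i < j ∧ j < k ∧ f i = f j ∧ f j = f k := by
    decide
  obtain ⟨i, j, k, hij, hjk, h1, h2⟩ := pigeon fun i => χ (triPt ((i : ℕ) * s) 0)
  obtain ⟨p, hp⟩ := Nat.exists_eq_add_of_lt (Fin.lt_def.1 hij)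
  obtain ⟨q, hq⟩ := Nat.exists_eq_add_of_lt (Fin.lt_def.1 hjk)
  have ej : ((j : ℕ) : ℝ) * s = (i : ℕ) * s + (p + 1 : ℕ) * s := by rw [hp]; push_cast; ring
  have ek : ((k : ℕ) : ℝ) * s = (i : ℕ) * s + (p + 1 : ℕ) * s + (q + 1 : ℕ) * s := by
    rw [hq, hp]; push_cast; ring
  simp only [ej, ek] at h1 h2
  refine no_mono_collinear χ (by positivity) (by positivity) ?_ _ h1 h2
  intro r hr x y z hxy hyz hxz hc
  obtain ⟨m, hm, rfl⟩ : ∃ m : ℕ, 0 < m ∧ r = m * s := by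
    rcases hr with h | h | h
    · exact ⟨_, Nat.succ_pos p, h⟩
    · exact ⟨_, Nat.succ_pos q, h⟩
    · exact ⟨(p + 1) + (q + 1), by omega, by rw [h]; push_cast; ring⟩
  exact hmul m hm ⟨by positivity, x, y, z, hxy, hyz, hxz, hc.1, hc.2⟩
end

section
/- For every coloring of the plane ℝ² with finitely many colors (i.e., every map χ : ℝ² → Fin c for some positive integer c), there exist 2^ℵ₀ pairwise distinct monochromatic equilateral triangles, i.e., the collection of monochromatic subsets of ℝ² homothetic to the set {(0,0), (1,0), (1/2, √3/2)} has cardinality 2^ℵ₀. -/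
/-!
For each real `r > 0`, Gallai's theorem (`Combinatorics.exists_mono_homothetic_copy`) applied to
the triangle scaled by `r` yields a monochromatic triangle of side `n * r` for some integer
`n ≥ 1`. A triangle determines its side, so the triangle together with `n` determines `r`.
Hence `𝔠 ≤ κ * ℵ₀`, where `κ` is the number of monochromatic triangles, and so `κ ≥ 𝔠`. The bound
`κ ≤ 𝔠` holds because a homothetic copy is given by its parameters `(a, b) ∈ ℝ² × ℝ`.
-/

/-- In a bounded nontrivial set, the ratio of a homothety is recovered from the image, through
the diameter. -/
lemma homothety_ratio_unique {S : Set (ℝ × ℝ)} (hS : S.Nontrivial) (hb : Bornology.IsBounded S)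
    {a a' : ℝ × ℝ} {b b' : ℝ} (h0 : 0 < b) (h0' : 0 < b')
    (h : (fun s : ℝ × ℝ => a + b • s) '' S = (fun s : ℝ × ℝ => a' + b' • s) '' S) : b = b' := by
  have key : ∀ (a : ℝ × ℝ) (b : ℝ), 0 < b →
      Metric.diam ((fun s : ℝ × ℝ => a + b • s) '' S) = b * Metric.diam S := by
    intro a b hb0
    have : (fun s : ℝ × ℝ => a + b • s) '' S = (fun x => a + x) '' ((fun s => b • s) '' S) := by
      rw [Set.image_image]
    rw [this, (isometry_add_left a).diam_image, Set.image_smul, diam_smul₀, Real.norm_of_nonneg hb0.le]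
  have hd : 0 < Metric.diam S := Metric.diam_pos hS hb
  have h2 := congrArg Metric.diam h
  rw [key a b h0, key a' b' h0'] at h2
  exact mul_right_cancel₀ hd.ne' h2

/-- For any finite coloring of the plane, the collection of monochromatic subsets of `ℝ²`
homothetic to `{(0,0), (1,0), (1/2, √3/2)}` (i.e. monochromatic equilateral triangles)
has cardinality `2^ℵ₀`. -/
theorem continuum_many_mono_equilateral_triangles
    (c : ℕ) (hc : 0 < c) (χ : ℝ × ℝ → Fin c) :
    Cardinal.mk {T : Set (ℝ × ℝ) |
      (∃ (a : ℝ × ℝ) (b : ℝ), 0 < b ∧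
        T = (fun s : ℝ × ℝ => a + b • s) ''
          ({((0 : ℝ), (0 : ℝ)), (1, 0), (1/2, Real.sqrt 3 / 2)} : Set (ℝ × ℝ))) ∧
      ∃ i : Fin c, ∀ x ∈ T, χ x = i} = Cardinal.continuum := by
  set S : Set (ℝ × ℝ) := {((0 : ℝ), (0 : ℝ)), (1, 0), (1/2, Real.sqrt 3 / 2)} with hSdef
  have hfin : S.Finite := by simp [hSdef]
  have hnt : S.Nontrivial :=
    ⟨(0, 0), by simp [hSdef], (1, 0), by simp [hSdef], by simp⟩
  apply le_antisymm
  · calc _ ≤ Cardinal.mk (Set.range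
            (fun p : (ℝ × ℝ) × ℝ => (fun s : ℝ × ℝ => p.1 + p.2 • s) '' S)) := by
          apply Cardinal.mk_le_mk_of_subset
          rintro T ⟨⟨a, b, -, rfl⟩, -⟩
          exact ⟨(a, b), rfl⟩
      _ ≤ Cardinal.mk ((ℝ × ℝ) × ℝ) := Cardinal.mk_range_le
      _ = Cardinal.continuum := by simp [Cardinal.mk_real]
  · have gallai : ∀ r : Set.Ioi (0 : ℝ), ∃ (n : ℕ) (a : ℝ × ℝ), 0 < n ∧
        ∃ i : Fin c, ∀ s ∈ S, χ (a + ((n : ℝ) * r.1) • s) = i := by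
      intro r
      obtain ⟨n, hn, a, i, h⟩ := Combinatorics.exists_mono_homothetic_copy
        ((hfin.image (fun s => r.1 • s)).toFinset) χ
      refine ⟨n, a, hn, i, fun s hs => ?_⟩
      have := h (r.1 • s) (by
        rw [Set.Finite.mem_toFinset]
        exact Set.mem_image_of_mem _ hs)
      rwa [← Nat.cast_smul_eq_nsmul ℝ, smul_smul, add_comm] at this
    choose n a hn i hi using gallai
    have hpos : ∀ r : Set.Ioi (0 : ℝ), 0 < (n r : ℝ) * r.1 := fun r =>
      mul_pos (Nat.cast_pos.2 (hn r)) r.2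
    set 𝒯 := {T : Set (ℝ × ℝ) |
      (∃ (a : ℝ × ℝ) (b : ℝ), 0 < b ∧ T = (fun s : ℝ × ℝ => a + b • s) '' S) ∧
      ∃ i : Fin c, ∀ x ∈ T, χ x = i}
    let f : Set.Ioi (0 : ℝ) → 𝒯 × ℕ := fun r =>
      (⟨(fun s : ℝ × ℝ => a r + ((n r : ℝ) * r.1) • s) '' S,
        ⟨a r, (n r : ℝ) * r.1, hpos r, rfl⟩, i r, by
          rintro _ ⟨s, hs, rfl⟩
          exact hi r s hs⟩, n r)
    have hf : Function.Injective f := by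
      intro r r' h
      have h1 := congrArg (fun p => (p.1 : Set (ℝ × ℝ))) h
      have h2 : n r = n r' := congrArg Prod.snd h
      have h3 := homothety_ratio_unique hnt hfin.isBounded (hpos r) (hpos r') h1
      rw [← h2] at h3
      exact Subtype.ext (mul_left_cancel₀ (Nat.cast_pos.2 (hn r)).ne' h3)
    have hle := Cardinal.mk_le_of_injective hf
    rw [Cardinal.mk_Ioi_real, Cardinal.mk_prod, Cardinal.lift_id, Cardinal.lift_id,
      Cardinal.mk_nat] at hle
    have hmax := hle.trans (Cardinal.mul_le_max _ _)
    rw [max_assoc, max_self, le_max_iff] at hmax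
    exact hmax.resolve_right (not_le.2 Cardinal.aleph0_lt_continuum)
end

section
/- For every finite 3-element configuration S of points in the plane ℝ² and every coloring of ℝ² with finitely many colors (i.e., every map χ : ℝ² → Fin c for some positive integer c), there exist 2^ℵ₀ pairwise distinct monochromatic subsets of ℝ² homothetic to S (sets of the form a + bS with a ∈ ℝ², b a positive real, on which χ is constant). -/
/-!
Van der Waerden's theorem in commutative monoids, applied to the free commutative monoid on `S`,
puts a monochromatic homothetic copy of `S` inside every translate `x + M`, where `M` is the
additive monoid generated by `S` (`exists_mono_copy_in_translate`). Since `M` is countable, one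
copy can lie in only countably many of these translates. Hence the translates, one for each point
of the plane, cannot all be served by fewer than continuum many copies.

The upper bound holds because a homothetic copy is determined by its pair `(a, b)`.
-/

/-- Every translate `x + M` contains a monochromatic copy, obtained by colouring the formal sum `m`
with the colour of its value in `x + M`. The linear map evaluates formal sums over `S` in the
plane, so its range is `M`, the additive monoid generated by `S`. -/
theorem exists_mono_copy_in_translate (S : Set (ℝ × ℝ)) (hS : S.Finite)
    (c : ℕ) (χ : ℝ × ℝ → Fin c) (x : ℝ × ℝ) :
    ∃ (a : ℝ × ℝ) (b : ℝ), 0 < b ∧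
      (∃ i : Fin c, ∀ s ∈ S, χ (a + b • s) = i) ∧
      ∀ s ∈ S, ∃ m : S →₀ ℕ, a + b • s = x + Finsupp.linearCombination ℕ Subtype.val m := by
  classical
  have := hS.fintype
  obtain ⟨n, hn, v, i, hi⟩ := Combinatorics.exists_mono_homothetic_copy
    (Finset.univ.image fun s : S => (Finsupp.single s 1 : S →₀ ℕ))
    (fun m => χ (x + Finsupp.linearCombination ℕ Subtype.val m))
  have key : ∀ s : S, x + Finsupp.linearCombination ℕ Subtype.val v + (n : ℝ) • (s : ℝ × ℝ) =
      x + Finsupp.linearCombination ℕ Subtype.val (n • Finsupp.single s 1 + v) := by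
    intro s
    rw [map_add, map_nsmul, Finsupp.linearCombination_single, one_smul, Nat.cast_smul_eq_nsmul]
    abel
  refine ⟨x + Finsupp.linearCombination ℕ Subtype.val v, n, by exact_mod_cast hn,
    ⟨i, fun s hs => ?_⟩, fun s hs => ⟨_, key ⟨s, hs⟩⟩⟩
  rw [key ⟨s, hs⟩]
  exact hi _ (Finset.mem_image_of_mem _ (Finset.mem_univ _))

/-- For any 3-point configuration `S` in the plane and any finite coloring of the plane,
the collection of monochromatic homothetic copies of `S` has cardinality `2^ℵ₀`. -/
theorem continuum_many_mono_copies_three_points (S : Set (ℝ × ℝ)) (hS : S.ncard = 3)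
    (c : ℕ) (hc : 0 < c) (χ : ℝ × ℝ → Fin c) :
    Cardinal.mk {T : Set (ℝ × ℝ) |
      (∃ (a : ℝ × ℝ) (b : ℝ), 0 < b ∧ T = (fun s : ℝ × ℝ => a + b • s) '' S) ∧
      ∃ i : Fin c, ∀ x ∈ T, χ x = i} = Cardinal.continuum := by
  have hfin : S.Finite := Set.finite_of_ncard_pos (by omega)
  have hne : S.Nonempty := Set.nonempty_of_ncard_ne_zero (by omega)
  have := hfin.countable.to_subtype
  have hplane : Cardinal.mk (ℝ × ℝ) = Cardinal.continuum := by simp [Cardinal.mk_real]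
  set 𝒯 := {T : Set (ℝ × ℝ) |
      (∃ (a : ℝ × ℝ) (b : ℝ), 0 < b ∧ T = (fun s : ℝ × ℝ => a + b • s) '' S) ∧
      ∃ i : Fin c, ∀ x ∈ T, χ x = i} with h𝒯
  apply le_antisymm
  · have hsub : 𝒯 ⊆ Set.range
        (fun p : (ℝ × ℝ) × ℝ => (fun s : ℝ × ℝ => p.1 + p.2 • s) '' S) := by
      rintro T ⟨⟨a, b, -, rfl⟩, -⟩
      exact ⟨(a, b), rfl⟩
    refine (Cardinal.mk_le_mk_of_subset hsub).trans (Cardinal.mk_range_le.trans ?_)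
    simp [Cardinal.mk_real]
  · have hpt : ∀ T : 𝒯, ∃ p, p ∈ (T : Set (ℝ × ℝ)) := by
      rintro ⟨T, ⟨a, b, -, rfl⟩, -⟩
      exact hne.image _
    choose pt hpt using hpt
    -- A point `x` is recovered from the copy chosen in `x + M` by subtracting an element of `M`
    -- from a point of that copy.
    have hsurj : Function.Surjective (fun q : 𝒯 × (S →₀ ℕ) =>
        pt q.1 - Finsupp.linearCombination ℕ Subtype.val q.2) := by
      intro x
      obtain ⟨a, b, hb, ⟨i, hi⟩, hm⟩ := exists_mono_copy_in_translate S hfin c χ x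
      let T : 𝒯 := ⟨(fun s : ℝ × ℝ => a + b • s) '' S, ⟨a, b, hb, rfl⟩, i, by
        rintro _ ⟨s, hs, rfl⟩
        exact hi s hs⟩
      obtain ⟨s, hs, hsT⟩ := hpt T
      obtain ⟨m, hm⟩ := hm s hs
      refine ⟨(T, m), ?_⟩
      change pt T - _ = x
      rw [← hsT]
      change a + b • s - _ = x
      rw [hm, add_sub_cancel_right]
    have hle : Cardinal.continuum ≤ Cardinal.mk 𝒯 * Cardinal.aleph0 := by
      rw [← hplane]
      refine (Cardinal.mk_le_of_surjective hsurj).trans ?_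
      rw [Cardinal.mk_prod, Cardinal.lift_id, Cardinal.lift_id]
      gcongr
      exact Cardinal.mk_le_aleph0
    by_contra! hlt
    exact (Cardinal.mul_lt_of_lt Cardinal.aleph0_le_continuum hlt
      Cardinal.aleph0_lt_continuum).not_ge hle
end

section
/- Let S be a finite set of points in ℝ² whose points do not all lie on a single line (i.e., S is not contained in any affine line of ℝ²). Then for every coloring of ℝ² with finitely many colors (i.e., every map χ : ℝ² → Fin c for some positive integer c), there exists a family of 2^ℵ₀ pairwise-disjoint monochromatic subsets of ℝ² each homothetic to S (each of the form a + bS with a ∈ ℝ² and b a positive real, with χ constant on it). -/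
/-!
The Hales–Jewett theorem yields a finite set `G` of points, depending only on `S` and the number
of colors, such that every coloring of the plane has a monochromatic homothetic copy of `S`
inside `G` (`exists_finite_set_mono_homothetic`). Applied to translates of the coloring, this gives
a monochromatic copy inside `(t, 0) + G` for every real `t`. For `t` in a sufficiently short
interval the translates `(t, 0) + G` are pairwise disjoint (`exists_pos_translates_disjoint`), hence
so are the copies chosen in them, and the interval has cardinality `2^ℵ₀`. Non-collinearity is used
only to know that `S` is nonempty, so that copies for distinct `t` are distinct.
-/

/-- Finitary form of Gallai's theorem, uniform in the coloring: the copies of `S` can all be found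
inside one finite set `G`. Here `G` is the image of the Hales–Jewett cube `ι → S` under
`v ↦ ∑ i, v i`; on a combinatorial line, the active coordinates contribute a multiple of the
parameter and the other ones a constant. -/
lemma exists_finite_set_mono_homothetic {M κ : Type*} [AddCommMonoid M] [Finite κ]
    (S : Set M) (hS : S.Finite) :
    ∃ G : Set M, G.Finite ∧ ∀ C : M → κ, ∃ a : ℕ, 0 < a ∧ ∃ (b : M) (k : κ),
      ∀ s ∈ S, b + a • s ∈ G ∧ C (b + a • s) = k := by
  classical
  have : Finite S := hS
  obtain ⟨ι, _, hι⟩ := Combinatorics.Line.exists_mono_in_high_dimension S κ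
  refine ⟨Set.range fun v : ι → S => ∑ i, (v i : M), Set.finite_range _, fun C => ?_⟩
  obtain ⟨l, k, hl⟩ := hι fun v => C (∑ i, (v i : M))
  set A : Finset ι := {i | l.idxFun i = none} with hA
  set b : M := ∑ i ∈ Aᶜ, ((l.idxFun i).map Subtype.val).getD 0 with hb
  have key : ∀ x : S, ∑ i, (l x i : M) = b + A.card • (x : M) := by
    intro x
    rw [← Finset.sum_compl_add_sum A]
    congr 1
    · apply Finset.sum_congr rfl
      intro i hi
      rw [hA, Finset.compl_filter, Finset.mem_filter] at hi
      obtain ⟨y, hy⟩ := Option.ne_none_iff_exists.mp hi.right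
      simp [← hy]
    · rw [← Finset.sum_const]
      apply Finset.sum_congr rfl
      intro i hi
      rw [hA, Finset.mem_filter] at hi
      rw [l.apply_none _ _ hi.right]
  refine ⟨A.card, Finset.card_pos.mpr ⟨l.proper.choose, ?_⟩, b, k, fun s hs => ?_⟩
  · rw [hA, Finset.mem_filter]
    exact ⟨Finset.mem_univ _, l.proper.choose_spec⟩
  · rw [← key ⟨s, hs⟩]
    exact ⟨⟨l ⟨s, hs⟩, rfl⟩, hl ⟨s, hs⟩⟩

/-- Sufficiently small distinct horizontal translates of a finite set are disjoint. -/
lemma exists_pos_translates_disjoint (G : Set (ℝ × ℝ)) (hG : G.Finite) :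
    ∃ ε : ℝ, 0 < ε ∧ ∀ t ∈ Set.Ioo 0 ε, ∀ u ∈ Set.Ioo 0 ε, ∀ g ∈ G, ∀ h ∈ G,
      ((t, 0) : ℝ × ℝ) + g = (u, 0) + h → t = u := by
  -- The nonzero differences of first coordinates form a finite set, so they stay away from `0`.
  set D : Set ℝ := (Set.image2 (fun g h : ℝ × ℝ => g.1 - h.1) G G) \ {0} with hD
  have hDfin : D.Finite := (hG.image2 _ hG).sdiff
  obtain ⟨ε, hε, hball⟩ := Metric.isOpen_iff.mp hDfin.isClosed.isOpen_compl 0 (by simp [hD])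
  refine ⟨ε, hε, fun t ht u hu g hg h hh heq => ?_⟩
  have h1 : t + g.1 = u + h.1 := congrArg Prod.fst heq
  by_contra hne
  refine hball (a := g.1 - h.1) ?_ ⟨⟨g, hg, h, hh, rfl⟩, ?_⟩
  · rw [mem_ball_zero_iff, Real.norm_eq_abs, abs_lt]
    constructor <;> linarith [ht.1, ht.2, hu.1, hu.2]
  · intro h0
    rw [Set.mem_singleton_iff] at h0
    exact hne (by linarith)

/-- For any finite set `S` of points in the plane, not all on a line, and any finite coloring
of the plane, there is a family of `2^ℵ₀` pairwise-disjoint monochromatic subsets of `ℝ²`,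
each homothetic to `S`. -/
theorem continuum_many_disjoint_mono_copies_not_collinear (S : Set (ℝ × ℝ)) (hS : S.Finite)
    (hline : ¬ Collinear ℝ S)
    (c : ℕ) (hc : 0 < c) (χ : ℝ × ℝ → Fin c) :
    ∃ F : Set (Set (ℝ × ℝ)), Cardinal.mk F = Cardinal.continuum ∧
      F.PairwiseDisjoint id ∧
      ∀ T ∈ F, (∃ (a : ℝ × ℝ) (b : ℝ), 0 < b ∧ T = (fun s : ℝ × ℝ => a + b • s) '' S) ∧
        ∃ i : Fin c, ∀ x ∈ T, χ x = i := by
  have hne : S.Nonempty := by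
    rw [Set.nonempty_iff_ne_empty]
    rintro rfl
    exact hline (collinear_empty ℝ _)
  obtain ⟨G, hG, hmono⟩ := exists_finite_set_mono_homothetic (κ := Fin c) S hS
  obtain ⟨ε, hε, hdisj⟩ := exists_pos_translates_disjoint G hG
  choose a ha b k hk using fun t : Set.Ioo (0 : ℝ) ε => hmono fun x => χ (((t : ℝ), 0) + x)
  let T : Set.Ioo (0 : ℝ) ε → Set (ℝ × ℝ) := fun t =>
    (fun s : ℝ × ℝ => (((t : ℝ), 0) + b t) + (a t : ℝ) • s) '' S
  have hT : ∀ t u x, x ∈ T t → x ∈ T u → t = u := by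
    rintro t u _ ⟨s, hs, rfl⟩ ⟨s', hs', h⟩
    refine Subtype.ext (hdisj t t.2 u u.2 _ (hk t s hs).1 _ (hk u s' hs').1 ?_)
    simpa only [add_assoc, Nat.cast_smul_eq_nsmul] using h.symm
  have hinj : Function.Injective T := by
    intro t u h
    obtain ⟨x, hx⟩ : (T t).Nonempty := hne.image _
    exact hT t u x hx (h ▸ hx)
  refine ⟨Set.range T, ?_, ?_, ?_⟩
  · rw [Cardinal.mk_range_eq _ hinj, Cardinal.mk_Ioo_real hε]
  · rintro _ ⟨t, rfl⟩ _ ⟨u, rfl⟩ h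
    exact Set.disjoint_left.mpr fun x hx hx' => h (congrArg T (hT t u x hx hx'))
  · rintro _ ⟨t, rfl⟩
    refine ⟨⟨_, _, Nat.cast_pos.mpr (ha t), rfl⟩, k t, ?_⟩
    rintro _ ⟨s, hs, rfl⟩
    simpa only [add_assoc, Nat.cast_smul_eq_nsmul] using (hk t s hs).2
end

section
/- Let n and k be positive integers with n > k, and let S be an n-element subset of ℝᵏ whose points are not all contained in any (k−1)-dimensional affine hyperplane (equivalently, S affinely spans ℝᵏ). Then for every coloring of ℝᵏ with finitely many colors (i.e., every map χ : ℝᵏ → Fin c for some positive integer c), there exists a family of 2^ℵ₀ pairwise-disjoint monochromatic subsets of ℝᵏ each homothetic to S (each of the form a + bS with a ∈ ℝᵏ and b a positive real, with χ constant on it). -/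
/-!
Gallai's theorem (`Combinatorics.exists_mono_homothetic_copy`) holds in every commutative monoid.
Let `G` be the additive subgroup of `ℝᵏ` generated by the finite set `S`. Colouring `G` by
`g ↦ χ (v + g)` yields a monochromatic homothetic copy of `S` inside the coset `v + G`. Since `G`
is countable, it has continuum many cosets, and copies in distinct cosets are disjoint.
-/

/-- Every coset of the subgroup generated by a finite set `S` contains a monochromatic homothetic
copy of `S`. -/
theorem exists_mono_copy_in_coset {k c : ℕ} {S : Set (Fin k → ℝ)} (hS : S.Finite)
    (χ : (Fin k → ℝ) → Fin c) (v : Fin k → ℝ) :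
    ∃ (a : Fin k → ℝ) (b : ℝ), 0 < b ∧ (∃ i : Fin c, ∀ s ∈ S, χ (a + b • s) = i) ∧
      ∀ s ∈ S, -v + (a + b • s) ∈ AddSubgroup.closure S := by
  have hfin : ((↑) ⁻¹' S : Set (AddSubgroup.closure S)).Finite :=
    hS.preimage Subtype.val_injective.injOn
  obtain ⟨d, hd, g, i, hi⟩ := Combinatorics.exists_mono_homothetic_copy hfin.toFinset
    (fun x : AddSubgroup.closure S => χ (v + x))
  refine ⟨v + g, d, by exact_mod_cast hd, ⟨i, fun s hs => ?_⟩, fun s hs => ?_⟩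
  · have := hi ⟨s, AddSubgroup.subset_closure hs⟩ (by simpa using hs)
    rw [← this]
    congr 1
    simp only [AddSubgroup.coe_add, AddSubgroup.coe_nsmul, Nat.cast_smul_eq_nsmul]
    abel
  · rw [Nat.cast_smul_eq_nsmul, add_assoc, neg_add_cancel_left]
    exact add_mem g.2 (nsmul_mem (AddSubgroup.subset_closure hs) d)

/-- A countable subgroup of `ℝᵏ`, `k > 0`, has continuum many cosets. -/
theorem mk_quotient_eq_continuum {k : ℕ} (hk : 0 < k) (G : AddSubgroup (Fin k → ℝ))
    [Countable G] : Cardinal.mk ((Fin k → ℝ) ⧸ G) = Cardinal.continuum := by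
  have hV : Cardinal.mk (Fin k → ℝ) = Cardinal.continuum := by
    simp only [Cardinal.mk_pi, Cardinal.mk_real, Cardinal.prod_const, Cardinal.mk_fin,
      Cardinal.lift_id]
    simpa using Cardinal.power_nat_eq Cardinal.aleph0_le_continuum hk
  apply le_antisymm
  · exact hV ▸ Cardinal.mk_le_of_surjective QuotientAddGroup.mk_surjective
  · by_contra! h
    have := (AddSubgroup.addGroupEquivQuotientProdAddSubgroup (s := G)).cardinal_eq
    rw [hV, Cardinal.mk_prod, Cardinal.lift_id, Cardinal.lift_id] at this
    exact this.not_gt (Cardinal.mul_lt_of_lt Cardinal.aleph0_le_continuum h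
      ((Cardinal.mk_le_aleph0 (α := G)).trans_lt Cardinal.aleph0_lt_continuum))


/-- For `n > k ≥ 1` and an `n`-element subset `S` of `ℝᵏ` that affinely spans `ℝᵏ`
(i.e. is not contained in any `(k-1)`-dimensional affine hyperplane), any finite coloring of
`ℝᵏ` admits a family of `2^ℵ₀` pairwise-disjoint monochromatic subsets, each homothetic
to `S`. -/
theorem continuum_many_disjoint_mono_copies_euclidean (n k : ℕ) (hk : 0 < k) (hnk : k < n)
    (S : Set (Fin k → ℝ)) (hcard : S.ncard = n) (hspan : affineSpan ℝ S = ⊤)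
    (c : ℕ) (hc : 0 < c) (χ : (Fin k → ℝ) → Fin c) :
    ∃ F : Set (Set (Fin k → ℝ)), Cardinal.mk F = Cardinal.continuum ∧
      F.PairwiseDisjoint id ∧
      ∀ T ∈ F, (∃ (a : Fin k → ℝ) (b : ℝ), 0 < b ∧
          T = (fun s : Fin k → ℝ => a + b • s) '' S) ∧
        ∃ i : Fin c, ∀ x ∈ T, χ x = i := by
  have hS : S.Finite := Set.finite_of_ncard_pos (by omega)
  have hne : S.Nonempty := Set.nonempty_of_ncard_ne_zero (by omega)
  have : Countable S := hS.countable
  have : Countable (AddSubgroup.closure S) := by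
    have h : Countable (Submodule.span ℤ (Set.range ((↑) : S → Fin k → ℝ))) := inferInstance
    rw [Subtype.range_coe] at h
    rw [← Submodule.span_int_eq_addSubgroupClosure]
    exact h
  choose a b hb hmono hcoset using
    fun q : (Fin k → ℝ) ⧸ AddSubgroup.closure S => exists_mono_copy_in_coset hS χ q.out
  let T (q : (Fin k → ℝ) ⧸ AddSubgroup.closure S) : Set (Fin k → ℝ) :=
    (fun s => a q + b q • s) '' S
  -- The coset is recovered from any point of the copy, giving injectivity and disjointness.
  have hT : ∀ q, ∀ x ∈ T q, (x : (Fin k → ℝ) ⧸ AddSubgroup.closure S) = q := by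
    rintro q _ ⟨s, hs, rfl⟩
    exact (QuotientAddGroup.eq.2 (hcoset q s hs)).symm.trans (QuotientAddGroup.out_eq' q)
  have hinj : Function.Injective T := by
    intro p q hpq
    obtain ⟨x, hx⟩ : (T p).Nonempty := hne.image _
    exact (hT p x hx).symm.trans (hT q x (hpq ▸ hx))
  refine ⟨Set.range T, ?_, ?_, ?_⟩
  · rw [Cardinal.mk_range_eq T hinj, mk_quotient_eq_continuum hk]
  · rintro _ ⟨p, rfl⟩ _ ⟨q, rfl⟩ hpq
    refine Set.disjoint_left.2 fun x hp hq => hpq ?_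
    rw [← hT p x hp, hT q x hq]
  · rintro _ ⟨q, rfl⟩
    refine ⟨⟨a q, b q, hb q, rfl⟩, ?_⟩
    obtain ⟨i, hi⟩ := hmono q
    exact ⟨i, by rintro _ ⟨s, hs, rfl⟩; exact hi s hs⟩
end

section
/- Let n and k be positive integers with n > k, and let S be an n-element subset of ℝᵏ whose points are not all contained in any (k−1)-dimensional affine hyperplane (equivalently, S affinely spans ℝᵏ). Then for every coloring of ℝᵏ with finitely many colors (i.e., every map χ : ℝᵏ → Fin c for some positive integer c), there exists a set R of positive real numbers of cardinality 2^ℵ₀ such that for every r ∈ R there exists a family of 2^ℵ₀ pairwise-disjoint monochromatic subsets of ℝᵏ each homothetic to S with dilation factor exactly r (each of the form a + rS with a ∈ ℝᵏ, with χ constant on it). -/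
/-!
The Hales–Jewett theorem gives a *finite* list of pairs `(m, b)`, `m` a positive integer and `b` a
vector, such that every finite coloring of `ℝᵏ` makes one of the sets `b + m S` of the list
monochromatic (`exists_finite_homothetic_list`).

Fix `x > 0` and, for every `t`, apply this to the coloring `y ↦ χ (t + x y)`: some set
`(t + x b) + (m x) S` is monochromatic, with `(m, b)` from the list. There are continuum many `t` and
finitely many pairs, so a single pair serves continuum many `t`; hence the dilation factor `m x` has
continuum many monochromatic copies of `S` (`exists_mul_dilation`). Now let `x` vary:
there are continuum many `x > 0` and finitely many values of `m`, so a single `m` serves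
continuum many `x`, which gives continuum many dilation factors `m x`.

Finally, for fixed `r` two copies `a + r S` and `a' + r S` meet only if `a - a'` lies in the finite set
`r S - r S`, so a maximal pairwise disjoint subfamily of continuum many copies still has
continuum many members (`exists_disjoint_translates`).
-/

open Cardinal Set

/-- A map from a set of size continuum to a finite type has a fiber of size continuum. -/
lemma exists_fiber_continuum {X J : Type} [Finite J] (hX : #X = 𝔠) (f : X → J) :
    ∃ j, #(f ⁻¹' {j}) = 𝔠 := by
  obtain ⟨j, hj⟩ := infinite_pigeonhole_card f 𝔠 hX.ge aleph0_le_continuum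
    ((lt_aleph0_of_finite J).trans_le
      (Ordinal.aleph0_le_cof_iff.2 (Ordinal.one_lt_cof_iff.2 (isSuccLimit_ord aleph0_le_continuum))))
  exact ⟨j, le_antisymm ((mk_set_le _).trans hX.le) hj⟩

/-- A bounded form of Gallai's theorem: finitely many homothetic copies of `S` suffice for all
`c`-colorings. -/
lemma exists_finite_homothetic_list {E : Type} [AddCommGroup E] [Module ℝ E] (S : Set E)
    (hS : S.Finite) (c : ℕ) :
    ∃ (J : Type) (_ : Finite J) (m : J → ℕ) (b : J → E), (∀ j, 0 < m j) ∧
      ∀ C : E → Fin c, ∃ j, ∃ i, ∀ s ∈ S, C (b j + (m j : ℝ) • s) = i := by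
  classical
  have := hS.to_subtype
  obtain ⟨ι, _, hι⟩ := Combinatorics.Line.exists_mono_in_high_dimension S (Fin c)
  -- A combinatorial line, forgetting the proof of properness: `none` marks its active coordinates.
  refine ⟨{g : ι → Option S // ∃ i, g i = none}, inferInstance,
    fun g => (Finset.univ.filter fun i => g.1 i = none).card,
    fun g => ∑ i, (g.1 i).elim 0 (fun s => (s : E)), ?_, ?_⟩
  · rintro ⟨g, i, hi⟩
    exact Finset.card_pos.2 ⟨i, by simpa using hi⟩
  · intro C
    obtain ⟨l, i, hl⟩ := hι fun v => C (∑ i, (v i : E))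
    refine ⟨⟨l.idxFun, l.proper⟩, i, fun s hs => ?_⟩
    rw [← hl ⟨s, hs⟩]
    congr 1
    have h : ((Finset.univ.filter fun i => l.idxFun i = none).card : ℝ) • s
        = ∑ i, if l.idxFun i = none then s else 0 := by
      rw [← Finset.sum_filter, Finset.sum_const, Nat.cast_smul_eq_nsmul]
    simp only [h]
    rw [← Finset.sum_add_distrib]
    refine Finset.sum_congr rfl fun i _ => ?_
    rw [Combinatorics.Line.apply_def]
    cases hg : l.idxFun i <;> simp [hg]

/-- The translation vectors `a` for which `a + r S` is monochromatic. -/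
def monoTranslates {E : Type} [AddCommGroup E] [Module ℝ E] (S : Set E) {c : ℕ}
    (χ : E → Fin c) (r : ℝ) : Set E :=
  {a | ∃ i, ∀ s ∈ S, χ (a + r • s) = i}

/-- With `m` and `b` as in `exists_finite_homothetic_list`, some multiple `m j * x` of `x` is the dilation
factor of continuum many monochromatic copies of `S`. -/
lemma exists_mul_dilation {E J : Type} [AddCommGroup E] [Module ℝ E] (hE : #E = 𝔠) [Finite J]
    {S : Set E} {c : ℕ} {m : J → ℕ} {b : J → E}
    (h : ∀ C : E → Fin c, ∃ j, ∃ i, ∀ s ∈ S, C (b j + (m j : ℝ) • s) = i)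
    (χ : E → Fin c) (x : ℝ) : ∃ j, #(monoTranslates S χ (m j * x)) = 𝔠 := by
  choose j i hji using fun t : E => h fun y => χ (t + x • y)
  obtain ⟨j₀, hj₀⟩ := exists_fiber_continuum hE j
  refine ⟨j₀, le_antisymm ((mk_set_le _).trans hE.le) ?_⟩
  have hinj : Function.Injective fun t : E => t + x • b j₀ := add_left_injective _
  rw [← hj₀, ← mk_image_eq (s := j ⁻¹' {j₀}) hinj]
  refine mk_le_mk_of_subset ?_
  rintro _ ⟨t, rfl, rfl⟩
  refine ⟨i t, fun s hs => ?_⟩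
  rw [← hji t s hs, smul_add, smul_smul, mul_comm x, add_assoc]

/-- Among continuum many translates of a finite set, continuum many are pairwise disjoint. -/
lemma exists_disjoint_translates {E : Type} [AddCommGroup E] (U : Set E) (hU : U.Finite)
    (hne : U.Nonempty) (A : Set E) (hA : #A = 𝔠) :
    ∃ B ⊆ A, #B = 𝔠 ∧ B.PairwiseDisjoint fun a => (fun u => a + u) '' U := by
  obtain ⟨B, hB⟩ := zorn_subset
    {B : Set E | B ⊆ A ∧ B.PairwiseDisjoint fun a => (fun u => a + u) '' U} (by
      intro C hC hchain
      refine ⟨⋃₀ C, ⟨sUnion_subset fun B hB => (hC hB).1, ?_⟩, fun B => subset_sUnion_of_mem⟩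
      exact (pairwiseDisjoint_sUnion hchain.directedOn).2 fun B hB => (hC hB).2)
  obtain ⟨hBA, hBd⟩ := hB.prop
  refine ⟨B, hBA, le_antisymm ((mk_le_mk_of_subset hBA).trans hA.le) ?_, hBd⟩
  by_contra! hlt
  -- By maximality every element of `A` lies in `B + (U - U)`.
  have hcov : A ⊆ image2 (· + ·) B (image2 (· - ·) U U) := by
    intro a ha
    by_cases haB : a ∈ B
    · obtain ⟨u, hu⟩ := hne
      exact ⟨a, haB, 0, ⟨u, hu, u, hu, sub_self u⟩, add_zero a⟩
    by_contra hno
    have hins : insert a B ∈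
        {B : Set E | B ⊆ A ∧ B.PairwiseDisjoint fun a => (fun u => a + u) '' U} := by
      refine ⟨insert_subset ha hBA, hBd.insert fun b hb _ => ?_⟩
      rw [Set.disjoint_left]
      rintro _ ⟨u, hu, rfl⟩ ⟨v, hv, hvu⟩
      refine hno ⟨b, hb, v - u, ⟨v, hv, u, hu, rfl⟩, ?_⟩
      have hvu' : b + v = a + u := hvu
      show b + (v - u) = a
      rw [← add_sub_assoc, hvu', add_sub_cancel_right]
    exact haB (hB.le_of_ge hins (subset_insert a B) (mem_insert a B))
  have hD : #(image2 (· - ·) U U) < 𝔠 :=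
    ((hU.image2 _ hU).lt_aleph0).trans aleph0_lt_continuum
  refine absurd hA (ne_of_lt ?_)
  refine (mk_le_mk_of_subset hcov).trans_lt (lt_of_le_of_lt ?_
    (mul_lt_of_lt aleph0_le_continuum hlt hD))
  exact mk_image2_le

/-- For `n > k ≥ 1` and an `n`-element subset `S` of `ℝᵏ` that affinely spans `ℝᵏ`, any
finite coloring of `ℝᵏ` admits `2^ℵ₀` positive dilation factors `r`, each realized by a
family of `2^ℵ₀` pairwise-disjoint monochromatic subsets homothetic to `S` with dilation
factor exactly `r`. -/
theorem continuum_many_dilation_factors (n k : ℕ) (hk : 0 < k) (hnk : k < n)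
    (S : Set (Fin k → ℝ)) (hcard : S.ncard = n) (hspan : affineSpan ℝ S = ⊤)
    (c : ℕ) (hc : 0 < c) (χ : (Fin k → ℝ) → Fin c) :
    ∃ R : Set ℝ, (∀ r ∈ R, 0 < r) ∧ Cardinal.mk R = Cardinal.continuum ∧
      ∀ r ∈ R, ∃ F : Set (Set (Fin k → ℝ)), Cardinal.mk F = Cardinal.continuum ∧
        F.PairwiseDisjoint id ∧
        ∀ T ∈ F, (∃ a : Fin k → ℝ, T = (fun s : Fin k → ℝ => a + r • s) '' S) ∧
          ∃ i : Fin c, ∀ x ∈ T, χ x = i := by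
  have hSpos : 0 < S.ncard := by omega
  have hSfin : S.Finite := finite_of_ncard_pos hSpos
  have hSne : S.Nonempty := nonempty_of_ncard_ne_zero hSpos.ne'
  have hE : #(Fin k → ℝ) = 𝔠 := by
    have : Nonempty (Fin k) := ⟨⟨0, hk⟩⟩
    simpa [mk_real] using power_nat_eq aleph0_le_continuum hk
  obtain ⟨J, _, m, b, hm, h⟩ := exists_finite_homothetic_list S hSfin c
  refine ⟨{r | 0 < r ∧ #(monoTranslates S χ r) = 𝔠}, fun r hr => hr.1, ?_, ?_⟩
  · choose j hj using fun x : Ioi (0 : ℝ) => exists_mul_dilation hE h χ x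
    obtain ⟨j₀, hj₀⟩ := exists_fiber_continuum (mk_Ioi_real 0) j
    refine le_antisymm ((mk_set_le _).trans mk_real.le) ?_
    have hinj : Function.Injective fun x : Ioi (0 : ℝ) => (m j₀ : ℝ) * x := fun x y hxy =>
      Subtype.ext (mul_left_cancel₀ (Nat.cast_ne_zero.2 (hm j₀).ne') hxy)
    refine (hj₀.symm.trans (mk_image_eq (s := j ⁻¹' {j₀}) hinj).symm).trans_le
      (mk_le_mk_of_subset ?_)
    rintro _ ⟨x, rfl, rfl⟩
    exact ⟨mul_pos (Nat.cast_pos.2 (hm _)) x.2, hj x⟩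
  · rintro r ⟨-, hr⟩
    obtain ⟨B, hBA, hB, hBd⟩ := exists_disjoint_translates ((fun s => r • s) '' S)
      (hSfin.image _) (hSne.image _) _ hr
    simp only [image_image] at hBd
    have hinj : InjOn (fun a => (fun s => a + r • s) '' S) B := fun a ha a' ha' haa =>
      hBd.elim ha ha' fun hd => (hSne.image _).ne_empty
        (disjoint_self.1 (hd.mono_right (le_of_eq haa)))
    refine ⟨(fun a => (fun s => a + r • s) '' S) '' B, ?_, ?_, ?_⟩
    · rw [mk_image_eq_of_injOn _ _ hinj, hB]
    · rintro _ ⟨a, ha, rfl⟩ _ ⟨a', ha', rfl⟩ hne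
      exact hBd ha ha' fun haa => hne (by rw [haa])
    · rintro _ ⟨a, ha, rfl⟩
      obtain ⟨i, hi⟩ := hBA ha
      exact ⟨⟨a, rfl⟩, i, by rintro _ ⟨s, hs, rfl⟩; exact hi s hs⟩
end
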